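/- Let n ≥ 2 and let Λ be an n-dimensional isotropic subspace of ℂ^{2n+1}. Then the function g_Λ is bisubmodular: for any two admissible subsets S₁, S₂ ⊆ [n] ∪ [n]̄ one has g_Λ(S₁) + g_Λ(S₂) ≥ g_Λ(S₁ ∩ S₂) + g_Λ(S₁ ⊔ S₂), where S₁ ⊔ S₂ := {a ∈ S₁ ∪ S₂ : ā ∉ S₁ ∪ S₂}. -/

import Mathlib

/-!
An isotropic subspace has dimension at most `n`, so `Λ` is isotropic of maximal dimension. Then
`g_Λ` is submodular on all subsets, by the dimension formula, and it does not increase when every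
pair `{q, q̄}` is deleted from a set. Deleting these pairs turns `U = S₁ ∪ S₂` into `J = S₁ ⊔ S₂`.

For the second point, let `P` be `U` without the unbarred element of each such pair. Let `E ⊆ G` be
the spans of the basis vectors `e_{p̄}` with `p ∈ J` and with `p ∈ P`, so that `Eᗮ = H_J` and
`Gᗮ = H_P ⊇ H_U`.

* As `P` is admissible, `G` is isotropic, hence so is `(Λ ∩ H_U) + G`, whose dimension is thus at
  most `dim Λ`. Since `(Λ ∩ H_U) ∩ G ⊆ Λ ∩ E`, this gives
  `dim (Λ ∩ H_U) + |P| ≤ dim Λ + dim (Λ ∩ E)`.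
* From `Λ + Eᗮ ⊆ (Λ ∩ E)ᗮ` one gets `dim Λ + dim (Λ ∩ E) ≤ dim (Λ ∩ H_J) + |J|`.

Together these say `rk_Λ(J) + |P| ≤ rk_Λ(U) + |J|`, which is `g_Λ(J) ≤ g_Λ(U)` because `|P| - |J|`
is the number of barred elements of `U` outside `J`.
-/

open scoped BigOperators

/-- Index set for the coordinates of `ℂ^{2n+1}`: `none` is the coordinate `0`,
`some (q, false)` is the coordinate `q+1 ∈ [n]`, and `some (q, true)` is the barred
coordinate `(q+1)̄ ∈ [n]̄`. -/
abbrev Idx (n : ℕ) := Option (Fin n × Bool)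

/-- The nondegenerate symmetric bilinear form
`y·z = 2 y₀ z₀ + Σ_q (y_q z_{q̄} + y_{q̄} z_q)` on `ℂ^{2n+1}`. -/
noncomputable def bform (n : ℕ) (y z : Idx n → ℂ) : ℂ :=
  2 * y none * z none +
    ∑ q : Fin n, (y (some (q, false)) * z (some (q, true)) +
      y (some (q, true)) * z (some (q, false)))

/-- A subspace is isotropic if the bilinear form vanishes identically on it. -/
def IsIsotropic (n : ℕ) (Λ : Submodule ℂ (Idx n → ℂ)) : Prop :=
  ∀ y ∈ Λ, ∀ z ∈ Λ, bform n y z = 0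

/-- `H_S`: the coordinate subspace of vectors whose coordinates indexed by `S` vanish. -/
noncomputable def coordSub (n : ℕ) (S : Set (Idx n)) : Submodule ℂ (Idx n → ℂ) where
  carrier := {v | ∀ i ∈ S, v i = 0}
  add_mem' := by
    intro a b ha hb i hi
    simp only [Pi.add_apply, ha i hi, hb i hi, add_zero]
  zero_mem' := by intro i hi; rfl
  smul_mem' := by
    intro c a ha i hi
    simp only [Pi.smul_apply, ha i hi, smul_zero]

/-- `rk_Λ(S) = n − dim(Λ ∩ H_S)`. -/
noncomputable def rk (n : ℕ) (Λ : Submodule ℂ (Idx n → ℂ)) (S : Set (Idx n)) : ℕ :=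
  n - Module.finrank ℂ ↥(Λ ⊓ coordSub n S)

/-- The set of coordinates in `[n] ∪ [n]̄` corresponding to a finite set of pairs. -/
def finIdx (n : ℕ) (S : Finset (Fin n × Bool)) : Set (Idx n) :=
  (fun p => (some p : Idx n)) '' ↑S

/-- A subset `S ⊆ [n] ∪ [n]̄` is admissible if it contains no pair `{q, q̄}`. -/
def Admissible (n : ℕ) (S : Finset (Fin n × Bool)) : Prop :=
  ∀ q : Fin n, ¬((q, false) ∈ S ∧ (q, true) ∈ S)

/-- `rk_Λ(S)` for `S ⊆ [n] ∪ [n]̄`. -/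
noncomputable def rkF (n : ℕ) (Λ : Submodule ℂ (Idx n → ℂ)) (S : Finset (Fin n × Bool)) : ℕ :=
  rk n Λ (finIdx n S)

/-- `g_Λ(S) = rk_Λ(S) − |S ∩ [n]̄|`. -/
noncomputable def gF (n : ℕ) (Λ : Submodule ℂ (Idx n → ℂ)) (S : Finset (Fin n × Bool)) : ℤ :=
  (rkF n Λ S : ℤ) - ((S.filter fun p => p.2 = true).card : ℤ)

/-- The delta-matroid `𝒟(Λ)`: maximal admissible subsets of full rank. -/
def deltaMatroid (n : ℕ) (Λ : Submodule ℂ (Idx n → ℂ)) : Set (Finset (Fin n × Bool)) :=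
  {S | Admissible n S ∧ S.card = n ∧ rkF n Λ S = n}

/-- `x(S) = Σ_{q ∈ S ∩ [n]} x_q − Σ_{q̄ ∈ S ∩ [n]̄} x_q`. -/
def xval (n : ℕ) (x : Fin n → ℝ) (S : Finset (Fin n × Bool)) : ℝ :=
  ∑ p ∈ S.filter (fun p => p.2 = false), x p.1 -
    ∑ p ∈ S.filter (fun p => p.2 = true), x p.1

/-- The polytope `𝒫(Λ)` cut out by the inequalities `x(S) ≤ g_Λ(S)` over admissible `S`. -/
def polytopeP (n : ℕ) (Λ : Submodule ℂ (Idx n → ℂ)) : Set (Fin n → ℝ) :=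
  {x | ∀ S : Finset (Fin n × Bool), Admissible n S → xval n x S ≤ (gF n Λ S : ℝ)}

/-- `χ(S')`: the 0–1 vector whose `q`-th coordinate is `1` exactly when `q ∈ S' ∩ [n]`. -/
def chi (n : ℕ) (S : Finset (Fin n × Bool)) : Fin n → ℝ :=
  fun q => if (q, false) ∈ S then 1 else 0

/-- `S₁ ⊔ S₂ = {a ∈ S₁ ∪ S₂ : ā ∉ S₁ ∪ S₂}`. -/
def sqcup (n : ℕ) (S₁ S₂ : Finset (Fin n × Bool)) : Finset (Fin n × Bool) :=
  (S₁ ∪ S₂).filter (fun p => (p.1, !p.2) ∉ S₁ ∪ S₂)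

open Module (finrank)
open LinearMap (BilinForm proj)
open Submodule (finrank_mono finrank_le finrank_sup_add_finrank_inf_eq mem_sup)

section BilinForm

variable {K V : Type*} [Field K] [AddCommGroup V] [Module K V] {B : BilinForm K V}
  {Λ W G E : Submodule K V}

lemma sup_le_orthogonal_sup (hB : B.IsRefl) (hW : W ≤ B.orthogonal W) (hG : G ≤ B.orthogonal G)
    (hWG : W ≤ B.orthogonal G) : W ⊔ G ≤ B.orthogonal (W ⊔ G) := by
  have hGW : G ≤ B.orthogonal W := fun g hg w hw => hB _ _ (hWG hw g hg)
  intro x hx y hy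
  obtain ⟨w, hw, g, hg, rfl⟩ := mem_sup.1 hy
  rw [map_add, LinearMap.add_apply, sup_le hW hGW hx w hw, sup_le hWG hG hx g hg, add_zero]

variable [FiniteDimensional K V]

lemma finrank_add_finrank_orthogonal_eq (hB : B.Nondegenerate) (W : Submodule K V) :
    finrank K W + finrank K (B.orthogonal W) = finrank K V := by
  rw [BilinForm.finrank_orthogonal hB, Nat.add_sub_cancel' (finrank_le W)]

lemma two_mul_finrank_le_of_le_orthogonal (hB : B.Nondegenerate) (hW : W ≤ B.orthogonal W) :
    2 * finrank K W ≤ finrank K V := by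
  have hmono := finrank_mono hW
  have hcompl := finrank_add_finrank_orthogonal_eq hB W
  omega

lemma finrank_add_finrank_inf_le_finrank_inf_orthogonal_add (hB : B.Nondegenerate)
    (hΛ : Λ ≤ B.orthogonal Λ) (E : Submodule K V) :
    finrank K Λ + finrank K ↥(Λ ⊓ E) ≤ finrank K ↥(Λ ⊓ B.orthogonal E) + finrank K E := by
  have hle : Λ ⊔ B.orthogonal E ≤ B.orthogonal (Λ ⊓ E) :=
    sup_le (hΛ.trans (BilinForm.orthogonal_le inf_le_left)) (BilinForm.orthogonal_le inf_le_right)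
  have hmono := finrank_mono hle
  have hdim := finrank_sup_add_finrank_inf_eq Λ (B.orthogonal E)
  have hinf := finrank_add_finrank_orthogonal_eq hB (Λ ⊓ E)
  have hE := finrank_add_finrank_orthogonal_eq hB E
  omega

lemma finrank_add_finrank_le_finrank_inf_orthogonal_add (hB : B.Nondegenerate) (hrefl : B.IsRefl)
    (hΛ : Λ ≤ B.orthogonal Λ) (hmax : finrank K V ≤ 2 * finrank K Λ + 1)
    (hG : G ≤ B.orthogonal G) (hWΛ : W ≤ Λ) (hWG : W ≤ B.orthogonal G) (hE : W ⊓ G ≤ E) :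
    finrank K W + finrank K G ≤ finrank K ↥(Λ ⊓ B.orthogonal E) + finrank K E := by
  have hW : W ≤ B.orthogonal W := hWΛ.trans (hΛ.trans (BilinForm.orthogonal_le hWΛ))
  have hsup : finrank K ↥(W ⊔ G) ≤ finrank K Λ := by
    have hbound := two_mul_finrank_le_of_le_orthogonal hB (sup_le_orthogonal_sup hrefl hW hG hWG)
    omega
  have hinf : finrank K ↥(W ⊓ G) ≤ finrank K ↥(Λ ⊓ E) :=
    finrank_mono (le_inf (inf_le_left.trans hWΛ) hE)
  calc finrank K W + finrank K G = finrank K ↥(W ⊔ G) + finrank K ↥(W ⊓ G) :=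
        (finrank_sup_add_finrank_inf_eq W G).symm
    _ ≤ finrank K Λ + finrank K ↥(Λ ⊓ E) := add_le_add hsup hinf
    _ ≤ finrank K ↥(Λ ⊓ B.orthogonal E) + finrank K E :=
        finrank_add_finrank_inf_le_finrank_inf_orthogonal_add hB hΛ E

end BilinForm

section Bar

variable {n : ℕ}

/-- The involution `q ↔ q̄` on `[n] ∪ [n]̄`. -/
def bar (p : Fin n × Bool) : Fin n × Bool := (p.1, !p.2)

lemma bar_bar (p : Fin n × Bool) : bar (bar p) = p := by
  simp only [bar, Bool.not_not]

lemma bar_injective : Function.Injective (bar (n := n)) :=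
  Function.LeftInverse.injective bar_bar

lemma mem_image_bar {S : Finset (Fin n × Bool)} {p : Fin n × Bool} :
    p ∈ S.image bar ↔ bar p ∈ S := by
  rw [← bar_injective.mem_finset_image (s := S), bar_bar]

lemma admissible_iff {S : Finset (Fin n × Bool)} : Admissible n S ↔ ∀ p ∈ S, bar p ∉ S := by
  simp only [Admissible, bar, Prod.forall, Bool.forall_bool, Bool.not_false, Bool.not_true]
  exact forall_congr' fun q => by tauto

/-- `U` with every pair `{q, q̄} ⊆ U` deleted, so that `S₁ ⊔ S₂` is `unpaired (S₁ ∪ S₂)`. -/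
def unpaired (U : Finset (Fin n × Bool)) : Finset (Fin n × Bool) :=
  U.filter fun p => bar p ∉ U

lemma mem_unpaired {U : Finset (Fin n × Bool)} {p : Fin n × Bool} :
    p ∈ unpaired U ↔ p ∈ U ∧ bar p ∉ U :=
  Finset.mem_filter

lemma unpaired_subset {U : Finset (Fin n × Bool)} : unpaired U ⊆ U :=
  Finset.filter_subset _ U

lemma admissible_unpaired_union_barred (U : Finset (Fin n × Bool)) :
    Admissible n (unpaired U ∪ U.filter fun p => p.2 = true) := by
  rw [admissible_iff]
  intro p hp hbar
  simp only [Finset.mem_union, mem_unpaired, Finset.mem_filter, bar_bar] at hp hbar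
  have hbar_snd : (bar p).2 = !p.2 := rfl
  grind

lemma card_unpaired_union_barred (U : Finset (Fin n × Bool)) :
    (unpaired U ∪ U.filter fun p => p.2 = true).card +
        ((unpaired U).filter fun p => p.2 = true).card =
      (unpaired U).card + (U.filter fun p => p.2 = true).card := by
  have hinter : unpaired U ∩ U.filter (fun p => p.2 = true) =
      (unpaired U).filter fun p => p.2 = true := by
    rw [Finset.inter_filter, Finset.inter_eq_left.2 unpaired_subset]
  rw [← hinter, Finset.card_union_add_card_inter]

end Bar

section Form

variable {n : ℕ}

/-- The form `y·z` of `bform` as a bundled bilinear form, for which orthogonal complements are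
available. -/
noncomputable def bilin (n : ℕ) : BilinForm ℂ (Idx n → ℂ) :=
  (2 : ℂ) • BilinForm.linMulLin (proj none) (proj none) +
    ∑ p : Fin n × Bool, BilinForm.linMulLin (proj (some p)) (proj (some (bar p)))

lemma bilin_eq_sum (y z : Idx n → ℂ) :
    bilin n y z = 2 * (y none * z none) + ∑ p, y (some p) * z (some (bar p)) := by
  simp [bilin]

lemma bilin_apply (y z : Idx n → ℂ) : bilin n y z = bform n y z := by
  simp [bilin_eq_sum, bform, bar, Fintype.sum_prod_type, add_comm, mul_assoc]

lemma isIsotropic_iff_le_orthogonal {Λ : Submodule ℂ (Idx n → ℂ)} :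
    IsIsotropic n Λ ↔ Λ ≤ (bilin n).orthogonal Λ := by
  simp only [IsIsotropic, SetLike.le_def, BilinForm.mem_orthogonal_iff, bilin_apply]
  exact forall₂_comm

lemma bilin_comm (y z : Idx n → ℂ) : bilin n y z = bilin n z y := by
  simp only [bilin_apply, bform, mul_comm, mul_left_comm, add_comm]

lemma bilin_isRefl (n : ℕ) : (bilin n).IsRefl := fun y z h => by
  rw [bilin_comm, h]

lemma bilin_single_none (z : Idx n → ℂ) : bilin n (Pi.single none 1) z = 2 * z none := by
  simp [bilin_eq_sum]

lemma bilin_single_some (p : Fin n × Bool) (z : Idx n → ℂ) :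
    bilin n (Pi.single (some p) 1) z = z (some (bar p)) := by
  simp [bilin_eq_sum, Pi.single_apply]

lemma bilin_nondegenerate (n : ℕ) : (bilin n).Nondegenerate := by
  refine (bilin_isRefl n).nondegenerate_iff_separatingRight.2 ?_
  intro z hz
  funext i
  rcases i with _ | p
  · simpa [bilin_single_none] using hz (Pi.single none 1)
  · simpa [bilin_single_some, bar_bar] using hz (Pi.single (some (bar p)) 1)

end Form

section Coordinates

variable {n : ℕ} {S T U : Finset (Fin n × Bool)}

lemma some_mem_finIdx {p : Fin n × Bool} : some p ∈ finIdx n S ↔ p ∈ S := by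
  simp [finIdx]

lemma mem_coordSub_finIdx {v : Idx n → ℂ} :
    v ∈ coordSub n (finIdx n S) ↔ ∀ p ∈ S, v (some p) = 0 :=
  Set.forall_mem_image

lemma finrank_spanSubset_finIdx (S : Finset (Fin n × Bool)) :
    finrank ℂ (Pi.spanSubset ℂ (finIdx n S)) = S.card := by
  rw [Pi.dim_spanSubset, finIdx, Set.ncard_image_of_injective _ (Option.some_injective _),
    Set.ncard_coe_finset]

lemma orthogonal_spanSubset_image_bar (S : Finset (Fin n × Bool)) :
    (bilin n).orthogonal (Pi.spanSubset ℂ (finIdx n (S.image bar))) = coordSub n (finIdx n S) := by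
  ext z
  rw [mem_coordSub_finIdx]
  calc z ∈ (bilin n).orthogonal (Pi.spanSubset ℂ (finIdx n (S.image bar)))
    _ ↔ Pi.spanSubset ℂ (finIdx n (S.image bar)) ≤ LinearMap.ker ((bilin n).flip z) := Iff.rfl
    _ ↔ ∀ p ∈ S, bilin n (Pi.single (some (bar p)) 1) z = 0 := by
      rw [Pi.spanSubset, Submodule.span_le, finIdx, Finset.coe_image, Set.image_image,
        Set.image_image, Set.image_subset_iff]
      simp only [Set.subset_def, Set.mem_preimage, SetLike.mem_coe, LinearMap.mem_ker,
        BilinForm.flip_apply, Pi.basisFun_apply]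
    _ ↔ ∀ p ∈ S, z (some p) = 0 := by
      simp only [bilin_single_some, bar_bar]

lemma spanSubset_image_bar_le_coordSub (hS : Admissible n S) :
    Pi.spanSubset ℂ (finIdx n (S.image bar)) ≤ coordSub n (finIdx n S) := by
  intro v hv
  rw [Pi.mem_spanSubset_iff] at hv
  refine mem_coordSub_finIdx.2 fun p hp => hv _ ?_
  rw [some_mem_finIdx, mem_image_bar]
  exact admissible_iff.1 hS p hp

lemma coordSub_inf_spanSubset_le (h : T ⊆ S ∪ U) :
    coordSub n (finIdx n S) ⊓ Pi.spanSubset ℂ (finIdx n T) ≤ Pi.spanSubset ℂ (finIdx n U) := by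
  rintro v ⟨hS, hT⟩
  rw [SetLike.mem_coe, Pi.mem_spanSubset_iff] at hT
  refine Pi.mem_spanSubset_iff.2 fun i hi => ?_
  by_cases hiS : i ∈ finIdx n S
  · exact hS i hiS
  · refine hT i fun hiT => ?_
    obtain ⟨p, hp, rfl⟩ := hiT
    rw [some_mem_finIdx] at hi hiS
    exact (Finset.mem_union.1 (h hp)).elim hiS hi

lemma coordSub_anti {A B : Set (Idx n)} (h : A ⊆ B) : coordSub n B ≤ coordSub n A :=
  fun _ hv i hi => hv i (h hi)

lemma coordSub_union (A B : Set (Idx n)) :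
    coordSub n (A ∪ B) = coordSub n A ⊓ coordSub n B :=
  le_antisymm (le_inf (coordSub_anti Set.subset_union_left) (coordSub_anti Set.subset_union_right))
    fun _ hv i hi => hi.elim (hv.1 i) (hv.2 i)

end Coordinates

section Rank

variable {n : ℕ} {Λ : Submodule ℂ (Idx n → ℂ)}

lemma rk_add_finrank (hΛ : finrank ℂ Λ ≤ n) (A : Set (Idx n)) :
    rk n Λ A + finrank ℂ ↥(Λ ⊓ coordSub n A) = n :=
  Nat.sub_add_cancel ((finrank_mono inf_le_left).trans hΛ)

lemma rk_inter_add_rk_union_le (hΛ : finrank ℂ Λ ≤ n) (A B : Set (Idx n)) :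
    rk n Λ (A ∩ B) + rk n Λ (A ∪ B) ≤ rk n Λ A + rk n Λ B := by
  have hsup : (Λ ⊓ coordSub n A) ⊔ (Λ ⊓ coordSub n B) ≤ Λ ⊓ coordSub n (A ∩ B) :=
    sup_le (inf_le_inf_left Λ (coordSub_anti Set.inter_subset_left))
      (inf_le_inf_left Λ (coordSub_anti Set.inter_subset_right))
  have hdim := finrank_sup_add_finrank_inf_eq (Λ ⊓ coordSub n A) (Λ ⊓ coordSub n B)
  rw [← inf_inf_distrib_left, ← coordSub_union] at hdim
  have hmono := finrank_mono hsup
  have hA := rk_add_finrank hΛ A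
  have hB := rk_add_finrank hΛ B
  have hinter := rk_add_finrank hΛ (A ∩ B)
  have hunion := rk_add_finrank hΛ (A ∪ B)
  omega

lemma gF_inter_add_gF_union_le (hΛ : finrank ℂ Λ ≤ n) (S T : Finset (Fin n × Bool)) :
    gF n Λ (S ∩ T) + gF n Λ (S ∪ T) ≤ gF n Λ S + gF n Λ T := by
  have hrk : rkF n Λ (S ∩ T) + rkF n Λ (S ∪ T) ≤ rkF n Λ S + rkF n Λ T := by
    have := rk_inter_add_rk_union_le hΛ (finIdx n S) (finIdx n T)
    rwa [finIdx, finIdx, ← Set.image_inter (Option.some_injective _), ← Set.image_union,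
      ← Finset.coe_inter, ← Finset.coe_union] at this
  have hcard := Finset.card_union_add_card_inter
    (S.filter fun p => p.2 = true) (T.filter fun p => p.2 = true)
  rw [← Finset.filter_union, ← Finset.filter_inter_distrib] at hcard
  unfold gF
  omega

lemma rkF_add_card_le (hiso : IsIsotropic n Λ) (hΛ : finrank ℂ Λ = n)
    {J P U : Finset (Fin n × Bool)} (hP : Admissible n P) (hPU : P ⊆ U)
    (hbar : P.image bar ⊆ U ∪ J.image bar) :
    rkF n Λ J + P.card ≤ rkF n Λ U + J.card := by
  have hV : finrank ℂ (Idx n → ℂ) ≤ 2 * finrank ℂ Λ + 1 := by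
    simp [hΛ, mul_comm]
  set G := Pi.spanSubset ℂ (finIdx n (P.image bar))
  have hGperp : (bilin n).orthogonal G = coordSub n (finIdx n P) :=
    orthogonal_spanSubset_image_bar P
  have hG : G ≤ (bilin n).orthogonal G := hGperp ▸ spanSubset_image_bar_le_coordSub hP
  have hUG : Λ ⊓ coordSub n (finIdx n U) ≤ (bilin n).orthogonal G :=
    hGperp ▸ inf_le_right.trans (coordSub_anti (Set.image_mono hPU))
  have hUE : Λ ⊓ coordSub n (finIdx n U) ⊓ G ≤ Pi.spanSubset ℂ (finIdx n (J.image bar)) :=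
    (inf_le_inf_right G inf_le_right).trans (coordSub_inf_spanSubset_le hbar)
  have hdim := finrank_add_finrank_le_finrank_inf_orthogonal_add (bilin_nondegenerate n)
    (bilin_isRefl n) (isIsotropic_iff_le_orthogonal.1 hiso) hV hG inf_le_left hUG hUE
  rw [orthogonal_spanSubset_image_bar] at hdim
  simp only [G, finrank_spanSubset_finIdx, Finset.card_image_of_injective _ bar_injective] at hdim
  have hJ := rk_add_finrank hΛ.le (finIdx n J)
  have hU := rk_add_finrank hΛ.le (finIdx n U)
  unfold rkF
  omega

lemma gF_unpaired_le (hiso : IsIsotropic n Λ) (hΛ : finrank ℂ Λ = n)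
    (U : Finset (Fin n × Bool)) : gF n Λ (unpaired U) ≤ gF n Λ U := by
  have hPU : unpaired U ∪ U.filter (fun p => p.2 = true) ⊆ U :=
    Finset.union_subset unpaired_subset (Finset.filter_subset _ U)
  have hbar : (unpaired U ∪ U.filter fun p => p.2 = true).image bar ⊆
      U ∪ (unpaired U).image bar := by
    rw [Finset.image_subset_iff]
    intro p hp
    rw [Finset.mem_union, mem_image_bar, bar_bar, mem_unpaired]
    exact (em (bar p ∈ U)).imp_right fun h => ⟨hPU hp, h⟩
  have hrk := rkF_add_card_le hiso hΛ (admissible_unpaired_union_barred U) hPU hbar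
  have hcard := card_unpaired_union_barred U
  unfold gF
  omega

end Rank

theorem stmt5_general (n : ℕ) (Λ : Submodule ℂ (Idx n → ℂ)) (hiso : IsIsotropic n Λ)
    (hΛ : finrank ℂ Λ = n) (S₁ S₂ : Finset (Fin n × Bool)) :
    gF n Λ (S₁ ∩ S₂) + gF n Λ (sqcup n S₁ S₂) ≤ gF n Λ S₁ + gF n Λ S₂ :=
  calc gF n Λ (S₁ ∩ S₂) + gF n Λ (sqcup n S₁ S₂)
      ≤ gF n Λ (S₁ ∩ S₂) + gF n Λ (S₁ ∪ S₂) :=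
        add_le_add_right (gF_unpaired_le hiso hΛ (S₁ ∪ S₂)) _
    _ ≤ gF n Λ S₁ + gF n Λ S₂ := gF_inter_add_gF_union_le hΛ.le S₁ S₂

theorem stmt5 (n : ℕ) (hn : 2 ≤ n)
    (Λ : Submodule ℂ (Idx n → ℂ)) (hiso : IsIsotropic n Λ)
    (hΛ : Module.finrank ℂ ↥Λ = n)
    (S₁ S₂ : Finset (Fin n × Bool)) (h₁ : Admissible n S₁) (h₂ : Admissible n S₂) :
    gF n Λ (S₁ ∩ S₂) + gF n Λ (sqcup n S₁ S₂) ≤ gF n Λ S₁ + gF n Λ S₂ :=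
  stmt5_general n Λ hiso hΛ S₁ S₂
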